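/- In the Diaconis–Fulton representation, if α is a τ-acceptable toppling sequence that stabilizes a configuration η in a finite set U, and β ⊆ U is any τ-legal toppling sequence for η, then m_β ≤ m_α pointwise. -/

import Mathlib

/-- The state of a site: `act m` means `m` active particles, `sleep` means one
sleeping particle. -/
inductive SiteState : Type
  | act : ℕ → SiteState
  | sleep : SiteState
deriving DecidableEq

/-- The rank of a site state for the total order `0 < 𝔰 < 1 < 2 < ⋯`. -/
def SiteState.rank : SiteState → ℕ
  | .act 0 => 0
  | .sleep => 1
  | .act (n + 1) => n + 2

/-- A toppling instruction: either a sleep instruction or a jump instruction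
towards a vertex. -/
inductive Instr (V : Type*) : Type _
  | sleep : Instr V
  | jump : V → Instr V

variable {V : Type*} [DecidableEq V]

/-- Removing one particle from a site (with the convention `𝔰 − 1 = 0`). -/
def SiteState.dec : SiteState → SiteState
  | .act (n + 1) => .act n
  | .act 0 => .act 0
  | .sleep => .act 0

/-- Adding one (active) particle to a site: a sleeping particle is woken up. -/
def SiteState.inc : SiteState → SiteState
  | .act n => .act (n + 1)
  | .sleep => .act 2

/-- The effect of an instruction performed at site `x` on the configuration `η`:
a sleep instruction puts a lone active particle at `x` to sleep, a jump
instruction moves one particle from `x` to its target. -/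
def applyInstr (ins : Instr V) (x : V) (η : V → SiteState) : V → SiteState :=
  match ins with
  | .sleep => if η x = .act 1 then Function.update η x .sleep else η
  | .jump y =>
      let η' := Function.update η x (SiteState.dec (η x))
      Function.update η' y (SiteState.inc (η' y))

/-- Toppling the site `x`: apply the next unused instruction of the stack at `x`
and increment the odometer there. -/
def topple (τ : V → ℕ → Instr V) (x : V) (s : (V → SiteState) × (V → ℕ)) :
    (V → SiteState) × (V → ℕ) :=
  (applyInstr (τ x (s.2 x)) x s.1, Function.update s.2 x (s.2 x + 1))

/-- Running a sequence of topplings. -/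
def runSeq (τ : V → ℕ → Instr V) : List V → ((V → SiteState) × (V → ℕ)) →
    (V → SiteState) × (V → ℕ)
  | [], s => s
  | x :: α, s => runSeq τ α (topple τ x s)

/-- A toppling sequence is legal if each toppling happens at a currently
unstable site (a site holding at least one active particle). -/
def LegalSeq (τ : V → ℕ → Instr V) : List V → ((V → SiteState) × (V → ℕ)) → Prop
  | [], _ => True
  | x :: α, s => 2 ≤ (s.1 x).rank ∧ LegalSeq τ α (topple τ x s)

/-- A toppling sequence is acceptable if each toppling happens at a currently
occupied site (holding at least a sleeping particle). -/
def AcceptableSeq (τ : V → ℕ → Instr V) : List V → ((V → SiteState) × (V → ℕ)) → Prop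
  | [], _ => True
  | x :: α, s => 1 ≤ (s.1 x).rank ∧ AcceptableSeq τ α (topple τ x s)

/-- A configuration is stable in `U` if every site of `U` holds either no particle
or one sleeping particle. -/
def StableIn (U : Set V) (η : V → SiteState) : Prop :=
  ∀ x ∈ U, (η x).rank ≤ 1

theorem rank_inc_ge (a : SiteState) (k : ℕ) (h : k ≤ a.rank) : k ≤ a.inc.rank := by
  rcases a with (_ | n) | _ <;> simp [SiteState.rank, SiteState.inc] at * <;> omega

theorem dec_inc_comm (a : SiteState) (h : 1 ≤ a.rank) : a.dec.inc = a.inc.dec := by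
  rcases a with (_ | n) | _ <;> simp [SiteState.rank, SiteState.inc, SiteState.dec] at *

theorem inc_ne_one (a : SiteState) (h : 1 ≤ a.rank) : a.inc ≠ .act 1 := by
  rcases a with (_ | n) | _ <;> simp [SiteState.rank, SiteState.inc] at *

theorem inc_sleep_of_one : (SiteState.act 1).inc = SiteState.sleep.inc := rfl

/-- The effect of an instruction on its own site, apart from arrivals. -/
def ownOp (ins : Instr V) (a : SiteState) : SiteState :=
  match ins with
  | .sleep => if a = .act 1 then .sleep else a
  | .jump _ => a.dec

/-- The arrivals caused by an instruction. -/
def arrive (ins : Instr V) (η : V → SiteState) : V → SiteState :=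
  match ins with
  | .sleep => η
  | .jump y => Function.update η y (η y).inc

theorem applyInstr_eq (ins : Instr V) (x : V) (η : V → SiteState) :
    applyInstr ins x η = arrive ins (Function.update η x (ownOp ins (η x))) := by
  cases ins with
  | sleep =>
    simp only [applyInstr, arrive, ownOp]
    split_ifs with h <;> simp
  | jump y => rfl

theorem ownOp_inc (ins : Instr V) (a : SiteState) (h : 1 ≤ a.rank) :
    (ownOp ins a).inc = ownOp ins a.inc := by
  cases ins with
  | sleep =>
    simp only [ownOp, if_neg (inc_ne_one a h)]
    split_ifs with h1
    · subst h1; rfl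
    · rfl
  | jump y => exact dec_inc_comm a h

theorem arrive_rank (ins : Instr V) (η : V → SiteState) (x : V) (k : ℕ)
    (h : k ≤ (η x).rank) : k ≤ (arrive ins η x).rank := by
  cases ins with
  | sleep => exact h
  | jump y =>
    by_cases hxy : x = y
    · subst hxy; simpa [arrive] using rank_inc_ge _ _ h
    · simpa [arrive, hxy] using h

theorem arrive_comm (i j : Instr V) (η : V → SiteState) :
    arrive i (arrive j η) = arrive j (arrive i η) := by
  cases i <;> cases j <;> try rfl
  rename_i y z
  by_cases h : y = z
  · subst h; rfl
  · have h' : z ≠ y := fun e => h e.symm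
    simp only [arrive, Function.update_of_ne h, Function.update_of_ne h']
    exact Function.update_comm h' _ _ _

theorem arrive_own_comm (i j : Instr V) (x : V) (η : V → SiteState) (h : 1 ≤ (η x).rank) :
    Function.update (arrive j η) x (ownOp i (arrive j η x)) =
      arrive j (Function.update η x (ownOp i (η x))) := by
  cases j with
  | sleep => rfl
  | jump y =>
    by_cases hxy : y = x
    · subst hxy
      simp [arrive, ownOp_inc i _ h]
    · have h' : x ≠ y := fun e => hxy e.symm
      simp only [arrive, Function.update_of_ne hxy, Function.update_of_ne h']
      exact Function.update_comm hxy _ _ _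

theorem applyInstr_comm (i j : Instr V) (x y : V) (hxy : x ≠ y) (η : V → SiteState)
    (hx : 1 ≤ (η x).rank) (hy : 1 ≤ (η y).rank) :
    applyInstr i x (applyInstr j y η) = applyInstr j y (applyInstr i x η) := by
  have hyx := hxy.symm
  simp only [applyInstr_eq]
  rw [arrive_own_comm, arrive_own_comm, arrive_comm]
  · simp only [Function.update_of_ne hxy, Function.update_of_ne hyx]
    rw [Function.update_comm hxy]
  · simpa [hyx] using hy
  · simpa [hxy] using hx

theorem topple_comm (τ : V → ℕ → Instr V) (x y : V) (hxy : x ≠ y)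
    (s : (V → SiteState) × (V → ℕ)) (hx : 1 ≤ (s.1 x).rank) (hy : 1 ≤ (s.1 y).rank) :
    topple τ x (topple τ y s) = topple τ y (topple τ x s) := by
  have hyx := hxy.symm
  simp only [topple, Function.update_of_ne hxy, Function.update_of_ne hyx]
  rw [applyInstr_comm _ _ x y hxy _ hx hy, Function.update_comm hyx]

theorem topple_rank (τ : V → ℕ → Instr V) (x y : V) (hxy : x ≠ y)
    (s : (V → SiteState) × (V → ℕ)) (k : ℕ) (hx : k ≤ (s.1 x).rank) :
    k ≤ ((topple τ y s).1 x).rank := by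
  simp only [topple, applyInstr_eq]
  apply arrive_rank
  simpa [hxy] using hx

theorem runSeq_rank (τ : V → ℕ → Instr V) (x : V) (k : ℕ) (α : List V) :
    ∀ s : (V → SiteState) × (V → ℕ), x ∉ α → k ≤ (s.1 x).rank →
      k ≤ ((runSeq τ α s).1 x).rank := by
  induction α with
  | nil => intro s _ h; exact h
  | cons y α ih =>
    intro s hx h
    rw [List.mem_cons, not_or] at hx
    exact ih _ hx.2 (topple_rank τ x y hx.1 s k h)

theorem move_front (τ : V → ℕ → Instr V) (x : V) (α : List V) :
    ∀ s : (V → SiteState) × (V → ℕ), x ∈ α → 1 ≤ (s.1 x).rank → AcceptableSeq τ α s →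
      AcceptableSeq τ (α.erase x) (topple τ x s) ∧
        runSeq τ (α.erase x) (topple τ x s) = runSeq τ α s := by
  induction α with
  | nil => intro s hx; simp at hx
  | cons y α ih =>
    intro s hx h ha
    by_cases hxy : x = y
    · subst hxy
      rw [List.erase_cons_head]
      exact ⟨ha.2, rfl⟩
    · have hyx : y ≠ x := fun e => hxy e.symm
      rw [List.erase_cons_tail (by simpa using hyx)]
      have hm : x ∈ α := by simpa [hxy] using hx
      obtain ⟨h1, h2⟩ := ih (topple τ y s) hm (topple_rank τ x y hxy s 1 h) ha.2
      rw [topple_comm τ x y hxy s h ha.1] at h1 h2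
      exact ⟨⟨topple_rank τ y x hyx s 1 ha.1, h1⟩, h2⟩

theorem main_aux (τ : V → ℕ → Instr V) (U : Set V) (β : List V) :
    ∀ (α : List V) (s : (V → SiteState) × (V → ℕ)), (∀ y ∈ β, y ∈ U) →
      AcceptableSeq τ α s → StableIn U (runSeq τ α s).1 → LegalSeq τ β s →
      ∀ x : V, β.count x ≤ α.count x := by
  induction β with
  | nil => intros; simp
  | cons z β ih =>
    intro α s hU ha hs hb x
    have hz : z ∈ α := by
      by_contra hz
      have h1 := runSeq_rank τ z 2 α s hz hb.1
      have h2 := hs z (hU z (by simp))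
      omega
    have hz1 : 1 ≤ (s.1 z).rank := le_trans (by norm_num) hb.1
    obtain ⟨h1, h2⟩ := move_front τ z α s hz hz1 ha
    have h3 := ih (α.erase z) (topple τ z s) (fun y hy => hU y (by simp [hy])) h1
      (by rw [h2]; exact hs) hb.2 x
    rw [(List.perm_cons_erase hz).count_eq x, List.count_cons, List.count_cons]
    omega

/-- Comparison between acceptable and legal topplings: if `α` is an acceptable
toppling sequence that stabilizes the configuration `η` in a finite set `U`, and
`β` is any legal toppling sequence for `η` contained in `U`, then `m_β ≤ m_α`
pointwise. -/
theorem stmt16 {V : Type*} [DecidableEq V] (τ : V → ℕ → Instr V) (U : Finset V)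
    (η : V → SiteState) (α β : List V)
    (hαU : ∀ y ∈ α, y ∈ U) (hβU : ∀ y ∈ β, y ∈ U)
    (hα : AcceptableSeq τ α (η, fun _ => 0))
    (hαs : StableIn (↑U) (runSeq τ α (η, fun _ => 0)).1)
    (hβ : LegalSeq τ β (η, fun _ => 0)) :
    ∀ x : V, β.count x ≤ α.count x := by
  exact main_aux τ (↑U) β α (η, fun _ => 0) (fun y hy => by simpa using hβU y hy) hα hαs hβ
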